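/- arXiv:1901.01913 — 2 statements merged into one kernel-verified Lean document; each statement's English description precedes it below -/
import Mathlib

section
/- Let a0 ∈ ℝ^k and λ > 0. The function φ̂ : ℝ^k → ℝ is continuously differentiable, with gradient ∇φ̂(a) = −ι* Č_{a0} S_λ((Č_{a0})* ι a) for every a ∈ ℝ^k; moreover this gradient map is Lipschitz continuous with Lipschitz constant ‖Č_{a0}‖_op² (operator norm). -/
open scoped BigOperators Matrix

attribute [local instance 10] Classical.propDecidable

noncomputable section

/-- The index `t mod m` as an element of `Fin m`. -/
def idx (m : ℕ) [NeZero m] (t : ℤ) : Fin m :=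
  ⟨(t % (m : ℤ)).toNat, by
    have hm : 0 < m := Nat.pos_of_ne_zero (NeZero.ne m)
    have hm' : (0 : ℤ) < (m : ℤ) := by exact_mod_cast hm
    have h1 : 0 ≤ t % (m : ℤ) := Int.emod_nonneg t (ne_of_gt hm')
    have h2 : t % (m : ℤ) < (m : ℤ) := Int.emod_lt_of_pos t hm'
    omega⟩

/-- Cyclic shift: `(cshift τ v) i = v ((i - τ) mod m)`. -/
def cshift {m : ℕ} [NeZero m] (τ : ℤ) (v : Fin m → ℝ) : Fin m → ℝ :=
  fun i => v (idx m ((i : ℤ) - τ))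

/-- Zero padding `ι : ℝ^k → ℝ^m`. -/
def pad (k m : ℕ) (a : Fin k → ℝ) : Fin m → ℝ :=
  fun i => if h : (i : ℕ) < k then a ⟨i, h⟩ else 0

/-- Restriction to the first `k` coordinates, `ι* : ℝ^m → ℝ^k`. -/
def unpad {k m : ℕ} (h : k ≤ m) (v : Fin m → ℝ) : Fin k → ℝ :=
  fun j => v (Fin.castLE h j)

/-- Circulant matrix `C_w` whose `j`-th column is `s_j[w]`. -/
def circ {m : ℕ} [NeZero m] (w : Fin m → ℝ) : Matrix (Fin m) (Fin m) ℝ :=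
  Matrix.of fun i j => cshift (j : ℤ) w i

/-- Reversed circulant matrix `Č_{a0}` whose `j`-th column is `s_{-j}[ι a0]`. -/
def rcirc (k m : ℕ) [NeZero m] (a0 : Fin k → ℝ) : Matrix (Fin m) (Fin m) ℝ :=
  Matrix.of fun i j => cshift (-(j : ℤ)) (pad k m a0) i

/-- Circular convolution `w ⊛ x = C_w x`. -/
def conv {m : ℕ} [NeZero m] (w x : Fin m → ℝ) : Fin m → ℝ := (circ w).mulVec x

def dotp {α : Type*} [Fintype α] (u v : α → ℝ) : ℝ := ∑ i, u i * v i

def l2sq {α : Type*} [Fintype α] (v : α → ℝ) : ℝ := ∑ i, v i ^ 2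

def l2norm {α : Type*} [Fintype α] (v : α → ℝ) : ℝ := Real.sqrt (l2sq v)

def l1norm {α : Type*} [Fintype α] (v : α → ℝ) : ℝ := ∑ i, |v i|

/-- Scalar soft-thresholding. -/
def soft (lam t : ℝ) : ℝ := Real.sign t * max (|t| - lam) 0

/-- Entrywise soft-thresholding `S_λ`. -/
def softvec {m : ℕ} (lam : ℝ) (u : Fin m → ℝ) : Fin m → ℝ := fun i => soft lam (u i)

/-- The shift truncation `ι* s_{-τ}[ι a0] ∈ ℝ^k`. -/
def shiftTrunc {k m : ℕ} [NeZero m] (h : k ≤ m) (a0 : Fin k → ℝ) (τ : Fin m) : Fin k → ℝ :=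
  unpad h (cshift (-(τ : ℤ)) (pad k m a0))

/-- The inner objective of the simplified marginal problem. -/
def phiHatInner (k m : ℕ) [NeZero m] (lam : ℝ) (a0 a : Fin k → ℝ) (x : Fin m → ℝ) : ℝ :=
  l2sq (pad k m a0) / 2 + l2sq x / 2 - dotp (conv (pad k m a) x) (pad k m a0) + lam * l1norm x

/-- The simplified marginal objective `φ̂`. -/
def phiHat (k m : ℕ) [NeZero m] (lam : ℝ) (a0 a : Fin k → ℝ) : ℝ :=
  sInf (Set.range (phiHatInner k m lam a0 a))

/-- Zero-padding `ι` as an `m × k` matrix. -/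
def padM (k m : ℕ) : Matrix (Fin m) (Fin k) ℝ :=
  Matrix.of fun i j => if (i : ℕ) = (j : ℕ) then 1 else 0

/-- The diagonal 0/1 projection matrix `P_I`. -/
def projM {m : ℕ} (I : Set (Fin m)) : Matrix (Fin m) (Fin m) ℝ :=
  Matrix.of fun i j => if i = j ∧ i ∈ I then 1 else 0

/-- The `ℓ² → ℓ²` operator norm of a matrix. -/
def opNorm {α β : Type*} [Fintype α] [Fintype β] (A : Matrix α β ℝ) : ℝ :=
  sSup {c | ∃ v : β → ℝ, l2norm v = 1 ∧ c = l2norm (A.mulVec v)}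

/-- The `ℓ² → ℓ∞` operator norm of a matrix. -/
def l2linfNorm {α β : Type*} [Fintype α] [Fintype β] (A : Matrix α β ℝ) : ℝ :=
  sSup {c | ∃ v : β → ℝ, l2norm v = 1 ∧ c = sSup {d | ∃ i, d = |A.mulVec v i|}}

/-- The smallest eigenvalue of a symmetric matrix, via the Rayleigh quotient. -/
def lamMin {n : ℕ} (A : Matrix (Fin n) (Fin n) ℝ) : ℝ :=
  sInf {c | ∃ v : Fin n → ℝ, l2sq v = 1 ∧ c = dotp v (A.mulVec v)}

/-- `‖v‖_p^p = ∑ |v i|^p` for a real exponent `p`. -/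
def lpPow {α : Type*} [Fintype α] (p : ℝ) (v : α → ℝ) : ℝ := ∑ i, |v i| ^ p

/-- The `ℓ^p` norm with real exponent `p`. -/
def lpNorm {α : Type*} [Fintype α] (p : ℝ) (v : α → ℝ) : ℝ := (lpPow p v) ^ (1 / p)

/-- The continuous linear functional `v ↦ ⟨g, v⟩` on `ℝ^n`. -/
def dotCLM {n : ℕ} (g : Fin n → ℝ) : (Fin n → ℝ) →L[ℝ] ℝ :=
  LinearMap.toContinuousLinearMap
    { toFun := fun v => dotp g v
      map_add' := fun x y => by
        simp [dotp, mul_add, Finset.sum_add_distrib]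
      map_smul' := fun c x => by
        simp only [dotp, Pi.smul_apply, smul_eq_mul, RingHom.id_apply, Finset.mul_sum]
        exact Finset.sum_congr rfl fun i _ => by ring }

lemma soft_eq (lam : ℝ) (hlam : 0 < lam) (t : ℝ) :
    soft lam t = max (t - lam) 0 - max (-t - lam) 0 := by
  unfold soft
  rcases lt_trichotomy t 0 with h | h | h
  · rw [Real.sign_of_neg h, abs_of_neg h, max_eq_right (a := t - lam) (by linarith)]; ring
  · subst h; simp
  · rw [Real.sign_of_pos h, abs_of_pos h, max_eq_right (a := -t - lam) (by linarith)]; ring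

lemma soft_cases (lam : ℝ) (hlam : 0 < lam) (t : ℝ) :
    (lam ≤ t ∧ soft lam t = t - lam) ∨ (t ≤ -lam ∧ soft lam t = t + lam) ∨
    (-lam ≤ t ∧ t ≤ lam ∧ soft lam t = 0) := by
  rw [soft_eq lam hlam]
  rcases le_total lam t with h | h
  · left; refine ⟨h, ?_⟩
    rw [max_eq_left (by linarith), max_eq_right (by linarith)]; ring
  · rcases le_total t (-lam) with h2 | h2
    · right; left; refine ⟨h2, ?_⟩
      rw [max_eq_right (by linarith), max_eq_left (by linarith)]; ring
    · right; right; refine ⟨h2, h, ?_⟩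
      rw [max_eq_right (by linarith), max_eq_right (by linarith)]; ring

lemma soft_lower (lam : ℝ) (hlam : 0 < lam) (u x : ℝ) :
    -(soft lam u ^ 2 / 2) ≤ x ^ 2 / 2 - x * u + lam * |x| := by
  have h1 := le_abs_self x
  have h2 := neg_abs_le x
  rcases soft_cases lam hlam u with ⟨h, e⟩ | ⟨h, e⟩ | ⟨h, h', e⟩ <;> rw [e]
  · nlinarith [sq_nonneg (x - (u - lam))]
  · nlinarith [sq_nonneg (x - (u + lam))]
  · rcases abs_cases x with ⟨e, _⟩ | ⟨e, _⟩ <;> rw [e] <;> nlinarith [sq_nonneg x]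

lemma soft_attain (lam : ℝ) (hlam : 0 < lam) (u : ℝ) :
    soft lam u ^ 2 / 2 - soft lam u * u + lam * |soft lam u| = -(soft lam u ^ 2 / 2) := by
  rcases soft_cases lam hlam u with ⟨h, e⟩ | ⟨h, e⟩ | ⟨h, h', e⟩ <;> rw [e]
  · rw [abs_of_nonneg (by linarith)]; ring
  · rw [abs_of_nonpos (by linarith)]; ring
  · simp

lemma soft_lip (lam : ℝ) (hlam : 0 < lam) (u v : ℝ) :
    |soft lam u - soft lam v| ≤ |u - v| := by
  rw [abs_le]
  constructor <;>
  rcases soft_cases lam hlam u with ⟨h, e⟩ | ⟨h, e⟩ | ⟨h, h', e⟩ <;>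
  rcases soft_cases lam hlam v with ⟨g, f⟩ | ⟨g, f⟩ | ⟨g, g', f⟩ <;> rw [e, f] <;>
  linarith [le_abs_self (u - v), neg_abs_le (u - v), abs_nonneg (u - v)]

lemma soft_cont (lam : ℝ) (hlam : 0 < lam) : Continuous (soft lam) := by
  have : soft lam = fun t => max (t - lam) 0 - max (-t - lam) 0 := funext (soft_eq lam hlam)
  rw [this]; fun_prop

lemma soft_deriv (lam : ℝ) (hlam : 0 < lam) (u : ℝ) :
    HasDerivAt (fun t => soft lam t ^ 2 / 2) (soft lam u) u := by
  rw [hasDerivAt_iff_isLittleO]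
  have hO : (fun v => soft lam v ^ 2 / 2 - soft lam u ^ 2 / 2 - (v - u) • soft lam u)
      =O[nhds u] (fun v => (v - u) ^ 2) := by
    refine Asymptotics.IsBigO.of_bound 1 (Filter.Eventually.of_forall fun v => ?_)
    have a1 := soft_lower lam hlam v (soft lam u)
    have a2 := soft_lower lam hlam u (soft lam v)
    have a3 := soft_attain lam hlam u
    have a4 := soft_attain lam hlam v
    have a5 := soft_lip lam hlam v u
    have a6 : (soft lam v - soft lam u) * (v - u) ≤ (v - u) ^ 2 := by
      calc _ ≤ |(soft lam v - soft lam u) * (v - u)| := le_abs_self _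
        _ = |soft lam v - soft lam u| * |v - u| := abs_mul _ _
        _ ≤ |v - u| * |v - u| := by gcongr
        _ = _ := by rw [← sq, sq_abs]
    rw [Real.norm_eq_abs, Real.norm_eq_abs, abs_of_nonneg (sq_nonneg (v - u)), smul_eq_mul,
      abs_of_nonneg (by nlinarith)]
    nlinarith
  refine hO.trans_isLittleO ?_
  have h0 : Filter.Tendsto (fun v : ℝ => v - u) (nhds u) (nhds 0) := by
    have : Continuous (fun v : ℝ => v - u) := by fun_prop
    simpa using this.tendsto u
  have := (Asymptotics.isLittleO_pow_id (𝕜 := ℝ) (n := 2) (by norm_num)).comp_tendsto h0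
  simpa [Function.comp_def] using this

lemma soft_contDiff (lam : ℝ) (hlam : 0 < lam) :
    ContDiff ℝ 1 (fun t => soft lam t ^ 2 / 2) := by
  rw [contDiff_one_iff_deriv]
  refine ⟨fun u => (soft_deriv lam hlam u).differentiableAt, ?_⟩
  have : deriv (fun t => soft lam t ^ 2 / 2) = soft lam :=
    funext fun u => (soft_deriv lam hlam u).deriv
  rw [this]; exact soft_cont lam hlam

lemma idx_self {m : ℕ} [NeZero m] (i : Fin m) (t : ℤ) (h : t % (m : ℤ) = (i : ℤ)) :
    idx m t = i := by
  apply Fin.ext; simp [idx, h]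

lemma idx_val {m : ℕ} [NeZero m] (t : ℤ) : ((idx m t : Fin m) : ℤ) = t % (m : ℤ) := by
  have hm' : (m : ℤ) ≠ 0 := by exact_mod_cast NeZero.ne m
  simp [idx, Int.emod_nonneg t hm']

lemma conv_dot {k m : ℕ} [NeZero m] (w x : Fin m → ℝ) (a0 : Fin k → ℝ) :
    dotp (conv w x) (pad k m a0) = dotp x ((rcirc k m a0)ᵀ.mulVec w) := by
  simp only [dotp, conv, Matrix.mulVec, dotProduct, circ, rcirc, cshift, Matrix.of_apply,
    Matrix.transpose_apply, Finset.sum_mul, Finset.mul_sum]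
  rw [Finset.sum_comm]
  refine Finset.sum_congr rfl fun j _ => ?_
  refine Finset.sum_bij' (fun i _ => idx m ((i : ℤ) - (j : ℤ)))
    (fun i _ => idx m ((i : ℤ) - (-(j : ℤ)))) (by simp) (by simp) ?_ ?_ ?_
  · intro i _
    apply idx_self
    rw [idx_val, Int.sub_emod, Int.emod_emod_of_dvd _ (dvd_refl _), ← Int.sub_emod]
    ring_nf
    exact Int.emod_eq_of_lt (by positivity) (by exact_mod_cast i.2)
  · intro i _
    apply idx_self
    rw [idx_val, Int.sub_emod, Int.emod_emod_of_dvd _ (dvd_refl _), ← Int.sub_emod]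
    ring_nf
    exact Int.emod_eq_of_lt (by positivity) (by exact_mod_cast i.2)
  · intro i _
    have : idx m (((idx m ((i : ℤ) - (j : ℤ)) : Fin m) : ℤ) - (-(j : ℤ))) = i := by
      apply idx_self
      rw [idx_val, Int.sub_emod, Int.emod_emod_of_dvd _ (dvd_refl _), ← Int.sub_emod]
      ring_nf
      exact Int.emod_eq_of_lt (by positivity) (by exact_mod_cast i.2)
    rw [this]; ring

lemma phiHat_eq {k m : ℕ} [NeZero m] (lam : ℝ) (hlam : 0 < lam) (a0 a : Fin k → ℝ) :
    phiHat k m lam a0 a = l2sq (pad k m a0) / 2 -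
      ∑ j, soft lam ((rcirc k m a0)ᵀ.mulVec (pad k m a) j) ^ 2 / 2 := by
  have key : ∀ x, phiHatInner k m lam a0 a x = l2sq (pad k m a0) / 2 +
      ∑ j, (x j ^ 2 / 2 - x j * ((rcirc k m a0)ᵀ.mulVec (pad k m a) j) + lam * |x j|) := by
    intro x
    rw [phiHatInner, conv_dot]
    simp only [l2sq, dotp, l1norm, Finset.sum_add_distrib, Finset.sum_sub_distrib,
      Finset.mul_sum, Finset.sum_div]
    ring
  apply IsLeast.csInf_eq
  constructor
  · refine ⟨softvec lam ((rcirc k m a0)ᵀ.mulVec (pad k m a)), ?_⟩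
    rw [key]
    simp only [softvec, soft_attain lam hlam, Finset.sum_neg_distrib]
    ring
  · rintro _ ⟨x, rfl⟩
    rw [key, sub_eq_add_neg, ← Finset.sum_neg_distrib]
    gcongr
    exact soft_lower lam hlam _ _

lemma sum_pad {k m : ℕ} (hkm : k ≤ m) (w : Fin m → ℝ) (a : Fin k → ℝ) :
    ∑ i, w i * pad k m a i = dotp (unpad hkm w) a := by
  obtain ⟨d, rfl⟩ := Nat.exists_eq_add_of_le hkm
  rw [Fin.sum_univ_add]
  simp [pad, dotp, unpad, Fin.castLE, Fin.castAdd]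

lemma l2norm_eq {α : Type*} [Fintype α] (v : α → ℝ) : l2norm v = ‖WithLp.toLp 2 v‖ := by
  simp [l2norm, l2sq, EuclideanSpace.norm_eq]

lemma l2norm_smul {α : Type*} [Fintype α] (c : ℝ) (v : α → ℝ) :
    l2norm (c • v) = |c| * l2norm v := by
  rw [l2norm_eq, l2norm_eq, WithLp.toLp_smul, norm_smul, Real.norm_eq_abs]

lemma opNorm_le {α β : Type*} [Fintype α] [Fintype β] (A : Matrix α β ℝ) (v : β → ℝ) :
    l2norm (A.mulVec v) ≤ opNorm A * l2norm v := by
  have hb : BddAbove {c | ∃ v : β → ℝ, l2norm v = 1 ∧ c = l2norm (A.mulVec v)} := by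
    refine ⟨Real.sqrt (∑ i, ∑ j, A i j ^ 2), ?_⟩
    rintro _ ⟨w, hw, rfl⟩
    have hw' : ∑ j, w j ^ 2 = 1 := by
      have := hw
      rw [l2norm, Real.sqrt_eq_one] at this
      exact this
    apply Real.sqrt_le_sqrt
    refine Finset.sum_le_sum fun i _ => ?_
    have := Finset.sum_mul_sq_le_sq_mul_sq Finset.univ (A i) w
    rw [hw', mul_one] at this
    exact this
  by_cases h : l2norm v = 0
  · have hv : v = 0 := by
      rw [l2norm_eq, norm_eq_zero] at h
      simpa using h
    subst hv
    simp [l2norm, l2sq]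
  · have hp : 0 < l2norm v := lt_of_le_of_ne (Real.sqrt_nonneg _) (Ne.symm h)
    have : l2norm (A.mulVec ((l2norm v)⁻¹ • v)) ≤ opNorm A := by
      refine le_csSup hb ⟨_, ?_, rfl⟩
      rw [l2norm_smul, abs_of_pos (by positivity)]
      field_simp
    rw [Matrix.mulVec_smul, l2norm_smul, abs_of_pos (by positivity), inv_mul_le_iff₀ hp] at this
    linarith

lemma opNorm_nonneg {α β : Type*} [Fintype α] [Fintype β] (A : Matrix α β ℝ) : 0 ≤ opNorm A := by
  apply Real.sSup_nonneg
  rintro _ ⟨v, _, rfl⟩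
  exact Real.sqrt_nonneg _

lemma rcirc_symm {k m : ℕ} [NeZero m] (a0 : Fin k → ℝ) : (rcirc k m a0)ᵀ = rcirc k m a0 := by
  ext i j
  simp only [rcirc, cshift, Matrix.transpose_apply, Matrix.of_apply, sub_neg_eq_add, add_comm]

lemma l2norm_unpad {k m : ℕ} (hkm : k ≤ m) (v : Fin m → ℝ) :
    l2norm (unpad hkm v) ≤ l2norm v := by
  obtain ⟨d, rfl⟩ := Nat.exists_eq_add_of_le hkm
  apply Real.sqrt_le_sqrt
  unfold l2sq
  rw [Fin.sum_univ_add]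
  have : 0 ≤ ∑ i : Fin d, v (Fin.natAdd k i) ^ 2 := Finset.sum_nonneg fun _ _ => sq_nonneg _
  simp only [unpad, Fin.castLE, Fin.castAdd] at *
  linarith

lemma l2norm_pad {k m : ℕ} (hkm : k ≤ m) (a : Fin k → ℝ) : l2norm (pad k m a) = l2norm a := by
  obtain ⟨d, rfl⟩ := Nat.exists_eq_add_of_le hkm
  unfold l2norm l2sq
  rw [Fin.sum_univ_add]
  simp [pad]

lemma pad_sub {k m : ℕ} (a b : Fin k → ℝ) : pad k m (a - b) = pad k m a - pad k m b := by
  ext i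
  simp only [pad, Pi.sub_apply]
  split <;> simp

/-- `φ̂` is continuously differentiable with gradient
`∇φ̂(a) = −ι* Č_{a0} S_λ((Č_{a0})* ι a)`, and this gradient map is Lipschitz with
constant `‖Č_{a0}‖_op²`. -/
theorem stmt_5 {k m : ℕ} [NeZero m] (hkm : k ≤ m) (lam : ℝ) (hlam : 0 < lam)
    (a0 : Fin k → ℝ) :
    let gr : (Fin k → ℝ) → Fin k → ℝ := fun a =>
      -unpad hkm ((rcirc k m a0).mulVec (softvec lam (((rcirc k m a0)ᵀ).mulVec (pad k m a))))
    ContDiff ℝ 1 (phiHat k m lam a0) ∧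
    (∀ a : Fin k → ℝ, HasFDerivAt (phiHat k m lam a0) (dotCLM (gr a)) a) ∧
    (∀ a b : Fin k → ℝ, l2norm (gr a - gr b) ≤ opNorm (rcirc k m a0) ^ 2 * l2norm (a - b)) := by
  intro gr
  have hu : ∀ a j, (rcirc k m a0)ᵀ.mulVec (pad k m a) j
      = dotCLM (unpad hkm ((rcirc k m a0)ᵀ j)) a := fun a j =>
    sum_pad hkm ((rcirc k m a0)ᵀ j) a
  have hphi : phiHat k m lam a0 = fun a => l2sq (pad k m a0) / 2 -
      ∑ j, soft lam (dotCLM (unpad hkm ((rcirc k m a0)ᵀ j)) a) ^ 2 / 2 := by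
    funext a
    rw [phiHat_eq lam hlam]
    simp only [hu]
  refine ⟨?_, ?_, ?_⟩
  · rw [hphi]
    refine contDiff_const.sub (ContDiff.sum fun j _ => ?_)
    exact (soft_contDiff lam hlam).comp (dotCLM (unpad hkm ((rcirc k m a0)ᵀ j))).contDiff
  · intro a
    rw [hphi]
    have h := (HasFDerivAt.fun_sum (u := Finset.univ) fun j _ =>
      (soft_deriv lam hlam (dotCLM (unpad hkm ((rcirc k m a0)ᵀ j)) a)).comp_hasFDerivAt a
        (dotCLM (unpad hkm ((rcirc k m a0)ᵀ j))).hasFDerivAt).const_sub (l2sq (pad k m a0) / 2)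
    refine h.congr_fderiv ?_
    ext1 v
    have hd : ∀ (g v : Fin k → ℝ), dotCLM g v = ∑ i, g i * v i := fun _ _ => rfl
    simp only [ContinuousLinearMap.neg_apply, ContinuousLinearMap.sum_apply,
      ContinuousLinearMap.smul_apply, smul_eq_mul, ← hu a, gr]
    simp only [hd, unpad, Pi.neg_apply, Matrix.mulVec, dotProduct, softvec,
      Matrix.transpose_apply, neg_mul, Finset.sum_neg_distrib, Finset.mul_sum, Finset.sum_mul]
    rw [Finset.sum_comm]
    refine congrArg _ (Finset.sum_congr rfl fun i _ => Finset.sum_congr rfl fun j _ => ?_)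
    ring
  · intro a b
    set A := rcirc k m a0 with hA
    have e : gr a - gr b = unpad hkm (A.mulVec (softvec lam (Aᵀ.mulVec (pad k m b)) -
        softvec lam (Aᵀ.mulVec (pad k m a)))) := by
      rw [Matrix.mulVec_sub]
      ext i
      simp only [gr, unpad, Pi.sub_apply, Pi.neg_apply]
      ring
    rw [e]
    have h1 : l2norm (softvec lam (Aᵀ.mulVec (pad k m b)) - softvec lam (Aᵀ.mulVec (pad k m a)))
        ≤ l2norm (A.mulVec (pad k m (a - b))) := by
      apply Real.sqrt_le_sqrt
      refine Finset.sum_le_sum fun i _ => ?_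
      rw [pad_sub, Matrix.mulVec_sub, hA, rcirc_symm]
      simp only [Pi.sub_apply, softvec]
      rw [sq_le_sq, abs_sub_comm]
      exact soft_lip lam hlam _ _
    calc _ ≤ _ := l2norm_unpad hkm _
      _ ≤ _ := opNorm_le _ _
      _ ≤ opNorm A * (opNorm A * l2norm (pad k m (a - b))) :=
        mul_le_mul_of_nonneg_left (h1.trans (opNorm_le _ _)) (opNorm_nonneg _)
      _ = _ := by rw [l2norm_pad hkm]; ring

end
end

section
/- Let a0 ∈ ℝ^k with ‖a0‖₂ = 1, let 0 < λ < 1, let τ ∈ {0,…,m−1} and ε ∈ {−1,+1}. Set u = ι* s_{−τ}[ι a0] ∈ ℝ^k and η = ‖u‖₂, and assume η > λ. Let ā = ε u / η, let σ ∈ {−1,0,1}^m be the vector with σ_τ = ε and all other entries 0, let I = {τ}, and define M_σ = −ι* Č_{a0} P_I (Č_{a0})* ι = −u uᵀ, b_σ = λ ι* Č_{a0} P_I σ = λ ε u, and γ = −(āᵀ M_σ ā + b_σᵀ ā). Then: (i) the Riemannian gradient of the quadratic piece vanishes at ā, i.e. (Id − ā āᵀ)(M_σ ā + b_σ) = 0;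 (ii) γ = η² − λη > 0; and (iii) the Riemannian Hessian satisfies (Id − ā āᵀ)(M_σ + γ Id)(Id − ā āᵀ) = (η² − λη)(Id − ā āᵀ), which is positive semidefinite. -/
open scoped BigOperators Matrix

attribute [local instance 10] Classical.propDecidable

noncomputable section

theorem aux_padT {k m n : ℕ} (hkm : k ≤ m) (X : Matrix (Fin m) (Fin n) ℝ) (r : Fin k) (j : Fin n) :
    ((padM k m)ᵀ * X) r j = X (Fin.castLE hkm r) j := by
  rw [Matrix.mul_apply, Finset.sum_eq_single (Fin.castLE hkm r)]
  · simp [padM]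
  · intro i _ hi
    have : (i : ℕ) ≠ (r : ℕ) := fun h => hi (Fin.ext (by simpa using h))
    simp [padM, this]
  · simp

theorem aux_B {k m : ℕ} [NeZero m] (hkm : k ≤ m) (a0 : Fin k → ℝ) (τ : Fin m) :
    (padM k m)ᵀ * rcirc k m a0 * projM ({τ} : Set (Fin m)) =
      Matrix.vecMulVec (shiftTrunc hkm a0 τ) (fun i => if i = τ then (1 : ℝ) else 0) := by
  ext r j
  rw [Matrix.mul_apply, Finset.sum_eq_single τ]
  · rw [aux_padT hkm, Matrix.vecMulVec_apply]
    by_cases h : j = τ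
    · subst h
      simp [projM, shiftTrunc, unpad, rcirc]
    · simp [projM, h, Ne.symm h]
  · intro i _ hi
    simp [projM, hi]
  · simp

theorem aux_M {k m : ℕ} [NeZero m] (hkm : k ≤ m) (a0 : Fin k → ℝ) (τ : Fin m) :
    (padM k m)ᵀ * rcirc k m a0 * projM ({τ} : Set (Fin m)) * (rcirc k m a0)ᵀ * padM k m =
      Matrix.vecMulVec (shiftTrunc hkm a0 τ) (shiftTrunc hkm a0 τ) := by
  rw [aux_B hkm, Matrix.mul_assoc, Matrix.vecMulVec_mul]
  congr 1
  have h : (rcirc k m a0)ᵀ * padM k m = ((padM k m)ᵀ * rcirc k m a0)ᵀ := by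
    simp [Matrix.transpose_mul]
  rw [h]
  ext r
  simp only [Matrix.vecMul, dotProduct, Matrix.transpose_apply]
  rw [Finset.sum_eq_single τ]
  · rw [aux_padT hkm]
    simp [shiftTrunc, unpad, rcirc]
  · intro i _ hi
    simp [hi]
  · simp

theorem aux_dotp {α : Type*} [Fintype α] (u v : α → ℝ) : dotp u v = u ⬝ᵥ v := rfl

theorem aux_psd {k : ℕ} (a : Fin k → ℝ) (ha : a ⬝ᵥ a = 1) :
    (1 - Matrix.vecMulVec a a).PosSemidef := by
  have hUU : Matrix.vecMulVec a a * Matrix.vecMulVec a a = Matrix.vecMulVec a a := by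
    rw [Matrix.vecMulVec_mul_vecMulVec, ha, one_smul]
  have h : (1 - Matrix.vecMulVec a a) =
      (1 - Matrix.vecMulVec a a)ᴴ * (1 - Matrix.vecMulVec a a) := by
    have : (1 - Matrix.vecMulVec a a)ᴴ = 1 - Matrix.vecMulVec a a := by
      ext i j
      simp [Matrix.conjTranspose_apply, Matrix.vecMulVec_apply, Matrix.one_apply, mul_comm, eq_comm]
    rw [this]
    simp [mul_sub, sub_mul, hUU]
  rw [h]
  exact Matrix.posSemidef_conjTranspose_mul_self _

/-- at a normalized signed shift truncation with singleton support, the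
Riemannian gradient of the quadratic piece vanishes, `γ = η² − λη > 0`, and the
Riemannian Hessian equals `(η² − λη)(Id − ā āᵀ)`, which is positive semidefinite. -/
theorem stmt_14 {k m : ℕ} [NeZero m] (hkm : k ≤ m) (lam : ℝ) (h0 : 0 < lam)
    (h1 : lam < 1) (a0 : Fin k → ℝ) (ha0 : l2norm a0 = 1)
    (τ : Fin m) (ε : ℝ) (hε : ε = 1 ∨ ε = -1)
    (hη : lam < l2norm (shiftTrunc hkm a0 τ)) :
    let u : Fin k → ℝ := shiftTrunc hkm a0 τ
    let η : ℝ := l2norm u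
    let abar : Fin k → ℝ := fun r => ε * u r / η
    let σ : Fin m → ℝ := fun i => if i = τ then ε else 0
    let I : Set (Fin m) := {τ}
    let M : Matrix (Fin k) (Fin k) ℝ :=
      -((padM k m)ᵀ * rcirc k m a0 * projM I * (rcirc k m a0)ᵀ * padM k m)
    let b : Fin k → ℝ := lam • ((padM k m)ᵀ * rcirc k m a0 * projM I).mulVec σ
    let γ : ℝ := -(dotp abar (M.mulVec abar) + dotp b abar)
    M = -Matrix.vecMulVec u u ∧
    b = (lam * ε) • u ∧
    (1 - Matrix.vecMulVec abar abar).mulVec (M.mulVec abar + b) = 0 ∧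
    γ = η ^ 2 - lam * η ∧ 0 < γ ∧
    (1 - Matrix.vecMulVec abar abar) * (M + γ • (1 : Matrix (Fin k) (Fin k) ℝ)) *
        (1 - Matrix.vecMulVec abar abar)
      = (η ^ 2 - lam * η) • (1 - Matrix.vecMulVec abar abar) ∧
    ((η ^ 2 - lam * η) • (1 - Matrix.vecMulVec abar abar)).PosSemidef := by
  intro u η abar σ I M b γ
  have hηpos : 0 < η := lt_trans h0 hη
  have hε2 : ε * ε = 1 := by rcases hε with h | h <;> simp [h]
  have huu : u ⬝ᵥ u = η ^ 2 := by
    have hn : 0 ≤ l2sq u := Finset.sum_nonneg fun i _ => sq_nonneg _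
    show _ = (Real.sqrt (l2sq u)) ^ 2
    rw [Real.sq_sqrt hn]
    simp [l2sq, dotProduct, sq]
  have hua : u = (ε * η) • abar := by
    ext r
    simp only [abar, Pi.smul_apply, smul_eq_mul]
    field_simp
    linear_combination (-u r) * hε2
  have hab : abar = (ε / η) • u := by
    ext r
    simp only [abar, Pi.smul_apply, smul_eq_mul]
    ring
  have haa : abar ⬝ᵥ abar = 1 := by
    rw [hab, smul_dotProduct, dotProduct_smul, huu]
    simp only [smul_eq_mul]
    field_simp
    linear_combination hε2
  have hM : M = -Matrix.vecMulVec u u := congrArg Neg.neg (aux_M hkm a0 τ)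
  have hb : b = (lam * ε) • u := by
    have : b = lam • (Matrix.vecMulVec u (fun i => if i = τ then (1 : ℝ) else 0)).mulVec σ :=
      congrArg (fun X : Matrix (Fin k) (Fin m) ℝ => lam • X.mulVec σ) (aux_B hkm a0 τ)
    rw [this, mul_smul]
    congr 1
    ext r
    simp [Matrix.mulVec, dotProduct, Matrix.vecMulVec_apply, σ, mul_comm]
  have hM' : M = (-η ^ 2) • Matrix.vecMulVec abar abar := by
    rw [hM]
    ext i j
    simp only [Matrix.neg_apply, Matrix.smul_apply, Matrix.vecMulVec_apply, smul_eq_mul, abar]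
    field_simp
    linear_combination (u i * u j) * hε2
  have hb' : b = (lam * η) • abar := by
    rw [hb, hab, smul_smul]
    congr 1
    field_simp
  clear_value M b
  have hUa : (Matrix.vecMulVec abar abar).mulVec abar = abar := by
    rw [Matrix.vecMulVec_mulVec, haa]; simp
  have hMa : M.mulVec abar = (-η ^ 2) • abar := by
    rw [hM', Matrix.smul_mulVec, hUa]
  have hγ : γ = η ^ 2 - lam * η := by
    simp only [γ]
    rw [aux_dotp, aux_dotp, hMa, hb', smul_dotProduct, dotProduct_smul, haa]
    simp only [smul_eq_mul]
    ring
  have hpos : 0 < η ^ 2 - lam * η := by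
    have : 0 < η * (η - lam) := mul_pos hηpos (sub_pos.mpr hη)
    nlinarith
  clear_value γ
  refine ⟨hM, hb, ?_, hγ, hγ ▸ hpos, ?_, (aux_psd abar haa).smul hpos.le⟩
  · rw [hMa, hb', ← add_smul, Matrix.mulVec_smul, Matrix.sub_mulVec, hUa]
    simp
  · have hUU : Matrix.vecMulVec abar abar * Matrix.vecMulVec abar abar
        = Matrix.vecMulVec abar abar := by
      rw [Matrix.vecMulVec_mul_vecMulVec, haa, one_smul]
    rw [hM', hγ]
    generalize Matrix.vecMulVec abar abar = U at hUU
    have h1 : (1 - U) * U = 0 := by simp [sub_mul, hUU]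
    have h2 : (1 - U) * (1 - U) = 1 - U := by rw [mul_sub, h1]; simp
    rw [mul_add, mul_smul_comm, mul_smul_comm, h1]
    simp [h2]

end
end
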